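/- Let $G$ be a group, $l \ge 1$, and let $a_1,\dots,a_{2l+1}$ be elements of $G$ satisfying the braid relations. Set $b_i = a_{i+1} a_i a_{i+1}^{-1}$ and $\phi_l = a_{2l+1}^{l+1} a_{2l-1}^{l} \cdots a_5^{3} a_3^{2} a_1$. Then for all finite sequences $D = (d_1,\dots,d_{k_1})$ and $E = (e_1,\dots,e_{k_2})$ of elements of $G$, the concatenated sequence $D \frown (a_{2l}, a_{2l-1}, \dots, a_2, a_1) \frown (a_{2l+1}, a_{2l}, \dots, a_2, a_1) \frown E$ is Hurwitz equivalent up to simultaneous conjugation to $(\phi_l d_1 \phi_l^{-1}, \dots, \phi_l d_{k_1} \phi_l^{-1}) \frown (a_{2l+1}, \dots, a_{2l+1}) \frown (a_{2l}, a_{2l-1}, \dots, a_2, a_1) \frown (b_{2l}, b_{2l-2}, \dots, b_4, b_2) \frown (\phi_l e_1 \phi_l^{-1}, \dots, \phi_l e_{k_2} \phi_l^{-1})$, where $a_{2l+1}$ is repeated $l+1$ times. -/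

import Mathlib

/-- One elementary (Hurwitz) transformation of sequences in a group. -/
def HurwitzStep {G : Type*} [Group G] (s t : List G) : Prop :=
  ∃ (l₁ l₂ : List G) (x y : G),
    (s = l₁ ++ x :: y :: l₂ ∧ t = l₁ ++ (x * y * x⁻¹) :: x :: l₂) ∨
    (s = l₁ ++ x :: y :: l₂ ∧ t = l₁ ++ y :: (y⁻¹ * x * y) :: l₂)

/-- One move of Hurwitz equivalence up to simultaneous conjugation. -/
def HurwitzStepC {G : Type*} [Group G] (s t : List G) : Prop :=
  HurwitzStep s t ∨ ∃ ψ : G, t = s.map fun w => ψ * w * ψ⁻¹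

/-- Hurwitz equivalence up to simultaneous conjugation. -/
def HurwitzEquivC {G : Type*} [Group G] : List G → List G → Prop :=
  Relation.ReflTransGen HurwitzStepC

/-- The sequence `a k, a (k-1), …, a m` (descending indices). -/
def seqDesc {G : Type*} (a : ℕ → G) (k m : ℕ) : List G :=
  (List.range (k + 1 - m)).map fun i => a (k - i)

/-- `φ l = a (2l+1) ^ (l+1) * a (2l-1) ^ l * ⋯ * a 5 ^ 3 * a 3 ^ 2 * a 1`. -/
def phiOdd {G : Type*} [Group G] (a : ℕ → G) (l : ℕ) : G :=
  ((List.range (l + 1)).map fun j => a (2 * (l - j) + 1) ^ (l - j + 1)).prod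

section Aux

variable {G : Type*} [Group G]

/-- Hurwitz equivalence without conjugation. -/
def HurEq : List G → List G → Prop := Relation.ReflTransGen HurwitzStep

/-- Simultaneous conjugation. -/
def cj (c : G) (L : List G) : List G := L.map fun w => c * w * c⁻¹

theorem HurEq.refl (s : List G) : HurEq s s := Relation.ReflTransGen.refl

theorem HurEq.trans {s t u : List G} (h : HurEq s t) (h' : HurEq t u) : HurEq s u :=
  Relation.ReflTransGen.trans h h'

theorem HurEq.ofEq {s t : List G} (h : s = t) : HurEq s t := h ▸ HurEq.refl s

theorem HurwitzStep.symmStep {s t : List G} (h : HurwitzStep s t) : HurwitzStep t s := by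
  obtain ⟨l₁, l₂, x, y, ⟨rfl, rfl⟩ | ⟨rfl, rfl⟩⟩ := h
  · exact ⟨l₁, l₂, x * y * x⁻¹, x, Or.inr ⟨rfl, by simp [mul_assoc]⟩⟩
  · exact ⟨l₁, l₂, y, y⁻¹ * x * y, Or.inl ⟨rfl, by simp [mul_assoc]⟩⟩

theorem HurEq.symm {s t : List G} (h : HurEq s t) : HurEq t s := by
  induction h with
  | refl => exact HurEq.refl _
  | tail _ h2 ih => exact Relation.ReflTransGen.head h2.symmStep ih

theorem HurEq.ctx {s t : List G} (h : HurEq s t) (u v : List G) :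
    HurEq (u ++ s ++ v) (u ++ t ++ v) := by
  induction h with
  | refl => exact HurEq.refl _
  | tail _ h2 ih =>
    refine Relation.ReflTransGen.tail ih ?_
    obtain ⟨l₁, l₂, x, y, ⟨rfl, rfl⟩ | ⟨rfl, rfl⟩⟩ := h2
    · exact ⟨u ++ l₁, l₂ ++ v, x, y, Or.inl ⟨by simp, by simp⟩⟩
    · exact ⟨u ++ l₁, l₂ ++ v, x, y, Or.inr ⟨by simp, by simp⟩⟩

theorem HurEq.append {s t s' t' : List G} (h : HurEq s t) (h' : HurEq s' t') :
    HurEq (s ++ s') (t ++ t') := by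
  have h1 := h.ctx [] s'
  have h2 := h'.ctx t []
  simp only [List.nil_append, List.append_nil] at h1 h2
  exact h1.trans h2

theorem HurEq.conj {s t : List G} (h : HurEq s t) (c : G) : HurEq (cj c s) (cj c t) := by
  induction h with
  | refl => exact HurEq.refl _
  | tail _ h2 ih =>
    refine Relation.ReflTransGen.tail ih ?_
    obtain ⟨l₁, l₂, x, y, ⟨rfl, rfl⟩ | ⟨rfl, rfl⟩⟩ := h2
    · exact ⟨cj c l₁, cj c l₂, c * x * c⁻¹, c * y * c⁻¹,
        Or.inl ⟨by simp [cj], by simp [cj, mul_assoc]⟩⟩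
    · exact ⟨cj c l₁, cj c l₂, c * x * c⁻¹, c * y * c⁻¹,
        Or.inr ⟨by simp [cj], by simp [cj, mul_assoc]⟩⟩

theorem HurEq.left (x y : G) : HurEq [x, y] [y, y⁻¹ * x * y] :=
  Relation.ReflTransGen.single ⟨[], [], x, y, Or.inr ⟨rfl, rfl⟩⟩

theorem HurEq.left_of {x y z : G} (h : x * y = y * z) : HurEq [x, y] [y, z] := by
  have e : y⁻¹ * x * y = z := by rw [mul_assoc, h]; simp
  simpa [e] using HurEq.left x y

/-- Moving the element `x` to the right past `k` copies of `y`. -/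
theorem HurEq.pow_left (y : G) (k : ℕ) : ∀ {x z : G}, x * y ^ k = y ^ k * z →
    HurEq (x :: List.replicate k y) (List.replicate k y ++ [z]) := by
  induction k with
  | zero => intro x z h; simp at h; subst h; exact HurEq.refl _
  | succ k ih =>
    intro x z h
    have h1 : (y⁻¹ * x * y) * y ^ k = y ^ k * z := by
      rw [pow_succ'] at h
      have : y⁻¹ * (x * (y * y ^ k)) = y⁻¹ * (y * y ^ k * z) := by rw [h]
      simpa [mul_assoc] using this
    have h2 := (HurEq.left x y).append (HurEq.refl (List.replicate k y))
    have h3 := (HurEq.refl [y]).append (ih h1)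
    simpa [List.replicate_succ] using h2.trans h3

theorem HurEq.comm_list (x : G) (L : List G) (h : ∀ y ∈ L, x * y = y * x) :
    HurEq (x :: L) (L ++ [x]) := by
  induction L with
  | nil => exact HurEq.refl _
  | cons y L ih =>
    have h2 := (HurEq.left_of (h y (by simp))).append (HurEq.refl L)
    have h3 := (HurEq.refl [y]).append (ih fun z hz => h z (by simp [hz]))
    simpa using h2.trans h3

theorem HurEq.braid {p q : G} (h : p * q * p = q * p * q) : HurEq [p, q, p] [q, p, q] := by
  have h1 := (HurEq.left p q).append (HurEq.refl [p])
  have h2 : HurEq [q⁻¹ * p * q, p] [p, q] := by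
    apply HurEq.left_of
    have : q⁻¹ * (p * q * p) = q⁻¹ * (q * p * q) := by rw [h]
    simpa [mul_assoc] using this
  exact h1.trans ((HurEq.refl [q]).append h2)

theorem HurEq.braid_pow {p q : G} (h : p * q * p = q * p * q) (k : ℕ) :
    HurEq (List.replicate k p ++ [q, p]) ([q, p] ++ List.replicate k q) := by
  induction k with
  | zero => exact HurEq.refl _
  | succ k ih =>
    have h1 := (HurEq.refl [p]).append ih
    have h2 := (HurEq.braid h).append (HurEq.refl (List.replicate k q))
    have h3 : HurEq (List.replicate (k + 1) p ++ [q, p]) ([q, p, q] ++ List.replicate k q) := by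
      simpa [List.replicate_succ] using h1.trans h2
    simpa [List.replicate_succ] using h3

theorem HurEq.localMove {p q r : G} (hpq : p * q * p = q * p * q) (hqr : q * r * q = r * q * r)
    (hpr : p * r = r * p) (l : ℕ) :
    HurEq (List.replicate l p ++ [q, r, p, q])
      (List.replicate (l + 1) r ++ [(r ^ (l + 1))⁻¹ * q * r ^ (l + 1), p,
        (r ^ l)⁻¹ * q * r ^ l]) := by
  have hpr' : HurEq [p, r] [r, p] := HurEq.left_of hpr
  have s1 : HurEq (List.replicate l p ++ [q, r, p, q]) (List.replicate l p ++ [q, p, r, q]) := by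
    simpa using hpr'.symm.ctx (List.replicate l p ++ [q]) [q]
  have s2 := (HurEq.braid_pow hpq l).append (HurEq.refl [r, q])
  have s3 := (HurEq.refl [q, p]).append (HurEq.braid_pow hqr l)
  have s4 := hpr'.ctx [q] (q :: List.replicate l r)
  have s5 := (HurEq.refl [q, r, p]).append
    (HurEq.pow_left r l (x := q) (z := (r ^ l)⁻¹ * q * r ^ l) (by simp [mul_assoc]))
  have s6 := (HurEq.comm_list p (List.replicate l r) (by
    intro y hy; rw [List.eq_of_mem_replicate hy, hpr])).ctx [q, r] [(r ^ l)⁻¹ * q * r ^ l]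
  have s7 := (HurEq.pow_left r (l + 1) (x := q) (z := (r ^ (l + 1))⁻¹ * q * r ^ (l + 1))
    (by simp [mul_assoc])).append (HurEq.refl [p, (r ^ l)⁻¹ * q * r ^ l])
  simp only [List.append_assoc, List.cons_append, List.nil_append, List.replicate_succ] at *
  exact s1.trans (s2.trans (s3.trans (s4.trans (s5.trans (s6.trans s7)))))

theorem cj_append (c : G) (s t : List G) : cj c (s ++ t) = cj c s ++ cj c t := by simp [cj]

theorem cj_mul (c d : G) (s : List G) : cj (c * d) s = cj c (cj d s) := by
  simp [cj, mul_assoc]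

theorem cj_fix (c : G) (s : List G) (h : ∀ y ∈ s, c * y = y * c) : cj c s = s := by
  unfold cj
  conv_rhs => rw [← List.map_id s]
  apply List.map_congr_left
  intro y hy
  simp [h y hy]

/-- The inductive step, for abstract lists `A`, `B`. -/
theorem HurEq.step {p q r φ : G} (hpq : p * q * p = q * p * q) (hqr : q * r * q = r * q * r)
    (hpr : p * r = r * p) (l : ℕ) (A B S : List G)
    (hA : ∀ y ∈ A, q * y = y * q ∧ r * y = y * r) (hB : ∀ y ∈ B, r * y = y * r)
    (hφp : φ * p = p * φ) (hφr : φ * r = r * φ) (hφq : φ * q * φ⁻¹ = p ^ l * q * (p ^ l)⁻¹)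
    (hS : HurEq (cj φ S) (List.replicate l p ++ A ++ B)) :
    HurEq (cj (r ^ (l + 1) * φ) ([q, p, r, q] ++ S))
      (List.replicate (l + 1) r ++ (q :: p :: A) ++ ((r * q * r⁻¹) :: B)) := by
  obtain ⟨x, hx⟩ : ∃ x, x = p ^ l * q * (p ^ l)⁻¹ := ⟨_, rfl⟩
  have e1 : cj φ ([q, p, r, q] ++ S) = [x, p, r, x] ++ cj φ S := by
    simp [cj, hφq, hφp, hφr, hx]
  have t1 := (HurEq.refl [x, p, r, x]).append hS
  have hxp : HurEq (x :: List.replicate l p) (List.replicate l p ++ [q]) :=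
    HurEq.pow_left p l (by simp [hx])
  have t2 := hxp.ctx [x, p, r] (A ++ B)
  have t3 := (HurEq.comm_list r (List.replicate l p) (by
    intro y hy; rw [List.eq_of_mem_replicate hy, hpr])).ctx [x, p] (q :: (A ++ B))
  have t4 := (HurEq.comm_list p (List.replicate l p) (by
    intro y hy; rw [List.eq_of_mem_replicate hy])).ctx [x] (r :: q :: (A ++ B))
  have t5 := (HurEq.left_of hpr).ctx (x :: List.replicate l p) (q :: (A ++ B))
  have t6 := hxp.append (HurEq.refl (r :: p :: q :: (A ++ B)))
  have t7 := (HurEq.localMove hpq hqr hpr l).append (HurEq.refl (A ++ B))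
  have key : HurEq ([x, p, r, x] ++ cj φ S) ((List.replicate (l + 1) r ++
      [(r ^ (l + 1))⁻¹ * q * r ^ (l + 1), p, (r ^ l)⁻¹ * q * r ^ l]) ++ (A ++ B)) := by
    simp only [List.append_assoc, List.cons_append, List.nil_append] at *
    exact t1.trans (t2.trans (t3.trans (t4.trans (t5.trans (t6.trans t7)))))
  have key2 := key.conj (r ^ (l + 1))
  rw [cj_mul, e1]
  refine key2.trans ?_
  have hrA : cj (r ^ (l + 1)) A = A := cj_fix _ _ fun y hy =>
    (Commute.pow_left (show Commute r y from (hA y hy).2) _)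
  have hrB : cj (r ^ (l + 1)) B = B := cj_fix _ _ fun y hy =>
    (Commute.pow_left (show Commute r y from hB y hy) _)
  have hrr : cj (r ^ (l + 1)) (List.replicate (l + 1) r) = List.replicate (l + 1) r :=
    cj_fix _ _ fun y hy => by
      rw [List.eq_of_mem_replicate hy]; exact (Commute.refl r).pow_left _
  have hp1 : r ^ (l + 1) * p = p * r ^ (l + 1) :=
    Commute.pow_left (show Commute r p from hpr.symm) _
  have e2 : cj (r ^ (l + 1)) [(r ^ (l + 1))⁻¹ * q * r ^ (l + 1), p, (r ^ l)⁻¹ * q * r ^ l]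
      = [q, p, r * q * r⁻¹] := by
    have h3 : r ^ (l + 1) * ((r ^ l)⁻¹ * q * r ^ l) * (r ^ (l + 1))⁻¹ = r * q * r⁻¹ := by
      rw [pow_succ']; simp only [mul_inv_rev]
      group
    simp only [cj, List.map_cons, List.map_nil, h3, hp1]
    simp [mul_assoc]
  rw [cj_append, cj_append, cj_append, hrA, hrB, hrr, e2]
  have t8 := (HurEq.comm_list (r * q * r⁻¹) A (by
    intro y hy
    have c1 : Commute q y := (hA y hy).1
    have c2 : Commute r y := (hA y hy).2
    exact (c2.mul_left c1).mul_left c2.inv_left)).ctx (List.replicate (l + 1) r ++ [q, p]) B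
  simpa using t8

theorem seqDesc_succ (a : ℕ → G) (k : ℕ) :
    seqDesc a (k + 1) 1 = a (k + 1) :: seqDesc a k 1 := by
  simp [seqDesc, List.range_succ_eq_map, Function.comp_def]

theorem mem_seqDesc {a : ℕ → G} {k : ℕ} {y : G} (h : y ∈ seqDesc a k 1) :
    ∃ i, 1 ≤ i ∧ i ≤ k ∧ y = a i := by
  simp only [seqDesc, List.mem_map, List.mem_range] at h
  obtain ⟨i, hi, rfl⟩ := h
  exact ⟨k - i, by omega, by omega, rfl⟩

theorem phiOdd_succ (a : ℕ → G) (l : ℕ) :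
    phiOdd a (l + 1) = a (2 * l + 3) ^ (l + 2) * phiOdd a l := by
  simp [phiOdd, List.range_succ_eq_map (n := l + 1), Function.comp_def, Nat.mul_add]

theorem phiOdd_comm (a : ℕ → G) (z : G) (l : ℕ)
    (h : ∀ i, 1 ≤ i → i ≤ 2 * l + 1 → Commute (a i) z) : Commute (phiOdd a l) z := by
  induction l with
  | zero => simpa [phiOdd] using h 1 le_rfl le_rfl
  | succ l ih =>
    rw [phiOdd_succ]
    exact ((h (2 * l + 3) (by omega) (by omega)).pow_left _).mul_left
      (ih fun i h1 h2 => h i h1 (by omega))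

theorem phiOdd_split (a : ℕ → G) (l : ℕ) :
    ∃ ρ, phiOdd a l = a (2 * l + 1) ^ (l + 1) * ρ ∧
      ∀ z, (∀ i, 1 ≤ i → i + 2 ≤ 2 * l + 1 → Commute (a i) z) → Commute ρ z := by
  cases l with
  | zero => exact ⟨1, by simp [phiOdd], fun z _ => Commute.one_left z⟩
  | succ l =>
    exact ⟨phiOdd a l, phiOdd_succ a l, fun z hz =>
      phiOdd_comm a z l fun i h1 h2 => hz i h1 (by omega)⟩

/-- The list `b (2l), …, b 2`. -/
def bList (a : ℕ → G) (l : ℕ) : List G := (List.range l).map fun j =>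
  a (2 * l - 2 * j + 1) * a (2 * l - 2 * j) * (a (2 * l - 2 * j + 1))⁻¹

theorem bList_succ (a : ℕ → G) (l : ℕ) :
    bList a (l + 1) = (a (2 * l + 3) * a (2 * l + 2) * (a (2 * l + 3))⁻¹) :: bList a l := by
  simp only [bList, List.range_succ_eq_map, List.map_cons, List.map_map]
  congr 1
  apply List.map_congr_left
  intro j _
  have : 2 * (l + 1) - 2 * (j + 1) = 2 * l - 2 * j := by omega
  simp [Function.comp_def, this]

theorem mainH (l : ℕ) (a : ℕ → G)
    (hbraid : ∀ i, 1 ≤ i → i + 1 ≤ 2 * l + 1 →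
      a i * a (i + 1) * a i = a (i + 1) * a i * a (i + 1))
    (hcomm : ∀ i j, 1 ≤ i → j ≤ 2 * l + 1 → i + 2 ≤ j → a i * a j = a j * a i) :
    HurEq (cj (phiOdd a l) (seqDesc a (2 * l) 1 ++ seqDesc a (2 * l + 1) 1))
      (List.replicate (l + 1) (a (2 * l + 1)) ++ seqDesc a (2 * l) 1 ++ bList a l) := by
  induction l with
  | zero =>
    apply HurEq.ofEq
    simp [cj, phiOdd, seqDesc, bList]
  | succ l ih =>
    have ih' := ih (fun i h1 h2 => hbraid i h1 (by omega))
      (fun i j h1 h2 h3 => hcomm i j h1 (by omega) h3)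
    have hA : ∀ y ∈ seqDesc a (2 * l) 1,
        a (2 * l + 2) * y = y * a (2 * l + 2) ∧ a (2 * l + 3) * y = y * a (2 * l + 3) := by
      intro y hy
      obtain ⟨i, h1, h2, rfl⟩ := mem_seqDesc hy
      exact ⟨(hcomm i _ h1 (by omega) (by omega)).symm,
        (hcomm i _ h1 (by omega) (by omega)).symm⟩
    have hB : ∀ y ∈ bList a l, a (2 * l + 3) * y = y * a (2 * l + 3) := by
      intro y hy
      simp only [bList, List.mem_map, List.mem_range] at hy
      obtain ⟨j, hj, rfl⟩ := hy
      have c1 : Commute (a (2 * l + 3)) (a (2 * l - 2 * j + 1)) :=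
        (hcomm _ _ (by omega) (by omega) (by omega)).symm
      have c2 : Commute (a (2 * l + 3)) (a (2 * l - 2 * j)) :=
        (hcomm _ _ (by omega) (by omega) (by omega)).symm
      exact (c1.mul_right c2).mul_right c1.inv_right
    obtain ⟨ρ, hρ, hρc⟩ := phiOdd_split a l
    have hφp : Commute (phiOdd a l) (a (2 * l + 1)) := by
      rw [hρ]
      exact ((Commute.refl _).pow_left _).mul_left
        (hρc _ fun i h1 h2 => hcomm i _ h1 (by omega) h2)
    have hφr : Commute (phiOdd a l) (a (2 * l + 3)) :=
      phiOdd_comm a _ l fun i h1 h2 => hcomm i _ h1 (by omega) (by omega)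
    have hφq : phiOdd a l * a (2 * l + 2) * (phiOdd a l)⁻¹ =
        a (2 * l + 1) ^ (l + 1) * a (2 * l + 2) * (a (2 * l + 1) ^ (l + 1))⁻¹ := by
      have c : ρ * a (2 * l + 2) = a (2 * l + 2) * ρ :=
        hρc _ fun i h1 h2 => hcomm i _ h1 (by omega) (by omega)
      have c' : ρ * (a (2 * l + 2) * ρ⁻¹) = a (2 * l + 2) := by
        rw [← mul_assoc, c]; simp
      rw [hρ, mul_inv_rev]
      calc _ = a (2 * l + 1) ^ (l + 1) * (ρ * (a (2 * l + 2) * ρ⁻¹)) *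
            (a (2 * l + 1) ^ (l + 1))⁻¹ := by simp only [mul_assoc]
        _ = _ := by rw [c']
    have st := HurEq.step (hbraid (2 * l + 1) (by omega) (by omega))
      (hbraid (2 * l + 2) (by omega) (by omega))
      (hcomm (2 * l + 1) (2 * l + 3) (by omega) (by omega) (by omega)) (l + 1)
      (seqDesc a (2 * l) 1) (bList a l) _ hA hB hφp hφr hφq ih'
    rw [phiOdd_succ, bList_succ]
    have e1 : 2 * (l + 1) = 2 * l + 1 + 1 := by ring
    rw [e1]
    rw [seqDesc_succ a (2 * l + 1 + 1), seqDesc_succ a (2 * l + 1), seqDesc_succ a (2 * l)]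
    refine HurEq.trans ?_ st
    apply HurEq.conj
    rw [seqDesc_succ a (2 * l)]
    have u1 := ((HurEq.comm_list (a (2 * l + 3)) _ fun y hy => (hA y hy).2).symm).ctx
      [a (2 * l + 2), a (2 * l + 1)] (a (2 * l + 2) :: a (2 * l + 1) :: seqDesc a (2 * l) 1)
    have u2 := ((HurEq.comm_list (a (2 * l + 2)) _ fun y hy => (hA y hy).1).symm).ctx
      [a (2 * l + 2), a (2 * l + 1), a (2 * l + 3)] (a (2 * l + 1) :: seqDesc a (2 * l) 1)
    simp only [List.append_assoc, List.cons_append, List.nil_append] at *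
    exact u1.trans u2

end Aux

/-- Lemma 4.2(a) of the paper: with `b i = a (i+1) * a i * (a (i+1))⁻¹`,
`D ⌢ (a (2l), …, a 1) ⌢ (a (2l+1), …, a 1) ⌢ E` is Hurwitz equivalent up to simultaneous
conjugation to
`φ D φ⁻¹ ⌢ (a (2l+1))^{l+1} ⌢ (a (2l), …, a 1) ⌢ (b (2l), b (2l-2), …, b 2) ⌢ φ E φ⁻¹`. -/
theorem statement5 {G : Type*} [Group G] (l : ℕ) (hl : 1 ≤ l) (a : ℕ → G)
    (hbraid : ∀ i, 1 ≤ i → i + 1 ≤ 2 * l + 1 →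
      a i * a (i + 1) * a i = a (i + 1) * a i * a (i + 1))
    (hcomm : ∀ i j, 1 ≤ i → j ≤ 2 * l + 1 → i + 2 ≤ j → a i * a j = a j * a i)
    (D E : List G) :
    HurwitzEquivC
      (D ++ seqDesc a (2 * l) 1 ++ seqDesc a (2 * l + 1) 1 ++ E)
      ((D.map fun d => phiOdd a l * d * (phiOdd a l)⁻¹) ++
        List.replicate (l + 1) (a (2 * l + 1)) ++
        seqDesc a (2 * l) 1 ++
        ((List.range l).map fun j =>
          a (2 * l - 2 * j + 1) * a (2 * l - 2 * j) * (a (2 * l - 2 * j + 1))⁻¹) ++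
        (E.map fun e => phiOdd a l * e * (phiOdd a l)⁻¹)) := by
  have h := (mainH l a hbraid hcomm).ctx (cj (phiOdd a l) D) (cj (phiOdd a l) E)
  have h' := Relation.ReflTransGen.mono (p := HurwitzStepC) (fun _ _ hs => Or.inl hs) _ _ h
  refine Relation.ReflTransGen.head (Or.inr ⟨phiOdd a l, rfl⟩) ?_
  simpa [cj, bList, HurwitzEquivC] using h'
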